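/- Let p ≥ 2 be an integer and let 2 ≤ k ≤ p−1 be an integer. Let M > 0, h ≥ 1, R > 1; let ω ∈ C^∞(ℝ) satisfy |ω(ξ)| ≤ 1 for all ξ, ω(ξ) = 0 for |ξ| ≤ 1, and ω constant on each of {ξ ≥ R} and {ξ ≤ −R}; let ψ ∈ C₀^∞(ℝ) with 0 ≤ ψ ≤ 1, ψ(y) = 1 for |y| ≤ 1/2 and ψ(y) = 0 for |y| ≥ 1. Define λ_{p−k}(x,ξ) := M·ω(ξ/h)·⟨ξ⟩_h^{−k+1}·∫₀ˣ ⟨y⟩^{−(p−k)/(p−1)} ψ(⟨y⟩/⟨ξ⟩_h^{p−1}) dy. Then for all α, β ∈ ℕ there exists C_{k,α,β} > 0, independent of h, M, x, ξ, such that |∂_ξ^α ∂_x^β λ_{p−k}(x,ξ)| ≤ C_{k,α,β}·M·⟨x⟩^{−β}·⟨ξ⟩_h^{−α} for all x, ξ ∈ ℝ; moreover, for β ≥ 1 one has the refined bound |∂_ξ^α ∂_x^β λ_{p−k}(x,ξ)| ≤ C_{k,α,β}·M·⟨x⟩^{(k−1)/(p−1)−β}·⟨ξ⟩_h^{−α−k+1}·χ_ξ(x),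 where χ_ξ is the characteristic function of the set {x ∈ ℝ : ⟨x⟩ ≤ ⟨ξ⟩_h^{p−1}}. -/

import Mathlib

open MeasureTheory Real

noncomputable section

/-- The Japanese bracket `⟨x⟩ = (1 + x²)^(1/2)`. -/
def jb (x : ℝ) : ℝ := Real.sqrt (1 + x ^ 2)

/-- `⟨ξ⟩ₕ = (h² + ξ²)^(1/2)`. -/
def jbh (h ξ : ℝ) : ℝ := Real.sqrt (h ^ 2 + ξ ^ 2)

/-!
Put `ξ = h η`. Then `⟨ξ⟩ₕ = h ⟨η⟩`, and up to the factor `h^(-k+1)` the symbol is a product of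
functions of `η` whose cutoff has scale `W = c ⟨η⟩^(p-1)` with `c = h^(p-1)`, so uniformity in `h`
becomes uniformity in `c > 0`. For `u = ⟨x⟩` the operators `u ∂_u` and `-W ∂_W` turn `φ(u/W)` into
`(Eφ)(u/W)` with `E = t d/dt`, and `Eφ` is again a smooth cutoff. Hence every derivative in `η` or
in `x` keeps the shape of the function and lowers the order by one, so all symbol estimates reduce
to sup bounds. For `β ≥ 1` the sup bound is immediate from the support of the cutoff. For `β = 0`
it reads `|∫₀ˣ ⟨y⟩^s φ(⟨y⟩/W) dy| ≤ C W^(s+1)` with `s + 1 = (k-1)/(p-1) > 0`, and this power of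
`W = ⟨ξ⟩ₕ^(p-1)` exactly compensates `⟨ξ⟩ₕ^(-k+1)`.
-/

section JapaneseBracket

variable {h : ℝ}

lemma jb_pos (x : ℝ) : 0 < jb x := by
  unfold jb; positivity

lemma abs_le_jb (x : ℝ) : |x| ≤ jb x :=
  Real.abs_le_sqrt (by linarith)

lemma jb_neg (x : ℝ) : jb (-x) = jb x := by
  simp only [jb, neg_sq]

lemma contDiff_jb {n : WithTop ℕ∞} : ContDiff ℝ n jb :=
  ContDiff.sqrt (by fun_prop) fun x => by positivity

lemma contDiff_jb_rpow (r : ℝ) {n : WithTop ℕ∞} : ContDiff ℝ n fun x => jb x ^ r :=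
  contDiff_jb.rpow_const_of_ne fun x => (jb_pos x).ne'

lemma hasDerivAt_jb (x : ℝ) : HasDerivAt jb (x / jb x) x := by
  have hsq : HasDerivAt (fun x : ℝ => 1 + x ^ 2) (2 * x) x := by
    simpa using (hasDerivAt_pow 2 x).const_add 1
  refine (hsq.sqrt (by positivity)).congr_deriv ?_
  rw [mul_div_mul_left _ _ two_ne_zero, jb]

lemma hasDerivAt_jb_rpow (r x : ℝ) :
    HasDerivAt (fun x => jb x ^ r) (r * x * jb x ^ (r - 2)) x := by
  refine ((hasDerivAt_jb x).rpow_const (Or.inl (jb_pos x).ne')).congr_deriv ?_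
  rw [show r - 1 = r - 2 + 1 by ring, Real.rpow_add_one (jb_pos x).ne']
  field_simp [(jb_pos x).ne']

lemma jbh_eq_mul_jb (hh : 0 < h) (ξ : ℝ) : jbh h ξ = h * jb (ξ / h) := by
  rw [jbh, jb, ← Real.sqrt_sq hh.le, ← Real.sqrt_mul (by positivity), Real.sqrt_sq hh.le]
  congr 1
  field_simp

lemma jbh_pos (hh : 0 < h) (ξ : ℝ) : 0 < jbh h ξ :=
  jbh_eq_mul_jb hh ξ ▸ mul_pos hh (jb_pos _)

lemma jbh_rpow (hh : 0 < h) (ξ r : ℝ) : jbh h ξ ^ r = h ^ r * jb (ξ / h) ^ r := by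
  rw [jbh_eq_mul_jb hh, Real.mul_rpow hh.le (jb_pos _).le]

lemma jb_rpow_le_rpow_add_rpow {s y W : ℝ} (hy : 0 < y) (hW : jb y ≤ W) :
    jb y ^ s ≤ y ^ s + W ^ s := by
  have hW0 := (jb_pos y).trans_le hW
  rcases le_total 0 s with hs | hs
  · exact (Real.rpow_le_rpow (jb_pos y).le hW hs).trans
      (le_add_of_nonneg_left (Real.rpow_nonneg hy.le s))
  · exact (Real.rpow_le_rpow_of_nonpos hy ((le_abs_self y).trans (abs_le_jb y)) hs).trans
      (le_add_of_nonneg_right (Real.rpow_nonneg hW0.le s))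

end JapaneseBracket

/-- The family `A` consists of smooth functions with `|∂ⁿ A i| ≤ C_n * b i * ⟨x⟩⁻ⁿ`, where `C_n`
does not depend on the index `i`. The weight `b` may vary with `i`, so that bounds uniform in
parameters such as `h` and the frozen variable are statements about one family. -/
structure IsUniformSymbol {ι : Type*} (b A : ι → ℝ → ℝ) : Prop where
  contDiff : ∀ i, ContDiff ℝ (⊤ : ℕ∞) (A i)
  exists_bound : ∀ n : ℕ, ∃ C, ∀ i x, |iteratedDeriv n (A i) x| ≤ C * (b i x / jb x ^ n)

/-- The symbol class `S^r` of functions of one variable with `|f⁽ⁿ⁾(x)| ≤ C_n ⟨x⟩^(r - n)`, encoded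
as a uniform symbol with a single member. -/
abbrev IsSymbol (r : ℝ) (f : ℝ → ℝ) : Prop :=
  IsUniformSymbol (fun (_ : Unit) x => jb x ^ r) fun _ => f

lemma exists_abs_iteratedDeriv_mul_le {ι : Type*} {b b' A A' : ι → ℝ → ℝ} {n : ℕ}
    (hA : ∀ i, ContDiff ℝ n (A i)) (hA' : ∀ i, ContDiff ℝ n (A' i))
    (hb : ∀ m ≤ n, ∃ C, ∀ i x, |iteratedDeriv m (A i) x| ≤ C * (b i x / jb x ^ m))
    (hb' : ∀ m ≤ n, ∃ C, ∀ i x, |iteratedDeriv m (A' i) x| ≤ C * (b' i x / jb x ^ m)) :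
    ∃ C, ∀ i x, |iteratedDeriv n (fun x => A i x * A' i x) x| ≤
      C * (b i x * b' i x / jb x ^ n) := by
  choose! C hC using hb
  choose! C' hC' using hb'
  refine ⟨∑ m ∈ Finset.range (n + 1), n.choose m * C m * C' (n - m), fun i x => ?_⟩
  rw [iteratedDeriv_fun_mul (hA i).contDiffAt (hA' i).contDiffAt, Finset.sum_mul]
  refine (Finset.abs_sum_le_sum_abs _ _).trans (Finset.sum_le_sum fun m hm => ?_)
  have hmn : m ≤ n := Nat.lt_succ_iff.1 (Finset.mem_range.1 hm)
  have hpow : jb x ^ n = jb x ^ m * jb x ^ (n - m) := (pow_mul_pow_sub _ hmn).symm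
  calc |n.choose m * iteratedDeriv m (A i) x * iteratedDeriv (n - m) (A' i) x|
      = n.choose m * (|iteratedDeriv m (A i) x| * |iteratedDeriv (n - m) (A' i) x|) := by
        rw [abs_mul, abs_mul, Nat.abs_cast, mul_assoc]
    _ ≤ n.choose m * (C m * (b i x / jb x ^ m) * (C' (n - m) * (b' i x / jb x ^ (n - m)))) := by
        have hCm := hC m hmn i x
        gcongr
        · exact (abs_nonneg _).trans hCm
        · exact hC' (n - m) (n.sub_le m) i x
    _ = n.choose m * C m * C' (n - m) * (b i x * b' i x / jb x ^ n) := by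
        rw [hpow]
        field_simp

namespace IsUniformSymbol

variable {ι κ : Type*} {b b' A A' : ι → ℝ → ℝ}

lemma reindex (hA : IsUniformSymbol b A) (f : κ → ι) :
    IsUniformSymbol (fun j => b (f j)) fun j => A (f j) :=
  ⟨fun j => hA.contDiff (f j), fun n => (hA.exists_bound n).imp fun _ hC j => hC (f j)⟩

lemma const (c : ℝ) : IsUniformSymbol (fun (_ : ι) _ => 1) fun _ _ => c := by
  refine ⟨fun _ => contDiff_const, fun n => ⟨|c|, fun _ x => ?_⟩⟩
  rcases n with _ | _
  · simp
  · have := jb_pos x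
    simp only [iteratedDeriv_const, Nat.succ_ne_zero, if_false, abs_zero]
    positivity

lemma exists_abs_le (hA : IsUniformSymbol b A) : ∃ C, ∀ i x, |A i x| ≤ C * b i x := by
  simpa using hA.exists_bound 0

protected lemma deriv (hA : IsUniformSymbol b A) :
    IsUniformSymbol (fun i x => b i x / jb x) fun i => deriv (A i) := by
  refine ⟨fun i => (contDiff_infty_iff_deriv.1 (hA.contDiff i)).2, fun n => ?_⟩
  obtain ⟨C, hC⟩ := hA.exists_bound (n + 1)
  refine ⟨C, fun i x => ?_⟩
  rw [← iteratedDeriv_succ', div_div, ← pow_succ']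
  exact hC i x

lemma add (hA : IsUniformSymbol b A) (hA' : IsUniformSymbol b A') :
    IsUniformSymbol b fun i x => A i x + A' i x := by
  refine ⟨fun i => (hA.contDiff i).add (hA'.contDiff i), fun n => ?_⟩
  obtain ⟨C, hC⟩ := hA.exists_bound n
  obtain ⟨C', hC'⟩ := hA'.exists_bound n
  refine ⟨C + C', fun i x => ?_⟩
  rw [iteratedDeriv_fun_add ((hA.contDiff i).contDiffAt.of_le (mod_cast le_top))
    ((hA'.contDiff i).contDiffAt.of_le (mod_cast le_top)), add_mul]
  exact (abs_add_le _ _).trans (add_le_add (hC i x) (hC' i x))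

lemma mul (hA : IsUniformSymbol b A) (hA' : IsUniformSymbol b' A') :
    IsUniformSymbol (fun i x => b i x * b' i x) fun i x => A i x * A' i x :=
  ⟨fun i => (hA.contDiff i).mul (hA'.contDiff i), fun _ => exists_abs_iteratedDeriv_mul_le
    (fun i => (hA.contDiff i).of_le (mod_cast le_top))
    (fun i => (hA'.contDiff i).of_le (mod_cast le_top))
    (fun m _ => hA.exists_bound m) fun m _ => hA'.exists_bound m⟩

/-- Sup bounds suffice here: each derivative only trades a member of the system for another one, at
the cost of a symbol coefficient. -/
lemma of_hasDerivAt {σ : κ → κ} {w B : κ → ι → ℝ → ℝ} {l E : κ → ι → ℝ → ℝ}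
    (hl : ∀ j, IsUniformSymbol (w j) (l j))
    (hE : ∀ j i x, HasDerivAt (E j i) (l j i x * E (σ j) i x) x)
    (hB : ∀ j, ∃ C, ∀ i x, |E j i x| ≤ C * B j i x)
    (hw : ∀ j i x, w j i x * B (σ j) i x = B j i x / jb x) (j : κ) :
    IsUniformSymbol (B j) (E j) := by
  have hderiv (j i) : deriv (E j i) = fun x => l j i x * E (σ j) i x :=
    funext fun x => (hE j i x).deriv
  have hsmooth (n : ℕ) (j i) : ContDiff ℝ n (E j i) := by
    induction n generalizing j with
    | zero => exact contDiff_zero.2 (continuous_iff_continuousAt.2 fun x => (hE j i x).continuousAt)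
    | succ n ih =>
      rw [Nat.cast_succ, contDiff_succ_iff_deriv, hderiv]
      refine ⟨fun x => (hE j i x).differentiableAt, by simp, ?_⟩
      exact (((hl j).contDiff i).of_le (mod_cast le_top)).mul (ih (σ j))
  refine ⟨fun i => contDiff_infty.2 fun n => hsmooth n j i, fun n => ?_⟩
  induction n using Nat.strong_induction_on generalizing j with
  | _ n ih =>
    rcases n with _ | n
    · simpa using hB j
    · obtain ⟨C, hC⟩ := exists_abs_iteratedDeriv_mul_le
        (fun i => ((hl j).contDiff i).of_le (mod_cast le_top)) (hsmooth n (σ j))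
        (fun m _ => (hl j).exists_bound m) fun m hm => ih m (Nat.lt_succ_iff.2 hm) (σ j)
      refine ⟨C, fun i x => ?_⟩
      rw [iteratedDeriv_succ', hderiv, pow_succ', ← div_div, ← hw]
      exact hC i x

end IsUniformSymbol

section Symbols

variable {r : ℝ} {f : ℝ → ℝ}

lemma isSymbol_id : IsSymbol 1 fun x => x := by
  refine ⟨fun _ => contDiff_id, fun n => ⟨1, fun _ x => ?_⟩⟩
  have hx := jb_pos x
  rw [iteratedDeriv_fun_id, Real.rpow_one, one_mul]
  rcases n with _ | _ | _
  · simpa using abs_le_jb x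
  · simp [hx.ne']
  · simp only [Nat.add_eq_zero_iff, one_ne_zero, and_false, if_false, Nat.reduceEqDiff, abs_zero]
    positivity

lemma isSymbol_jb_rpow (r : ℝ) : IsSymbol r fun x => jb x ^ r := by
  refine IsUniformSymbol.of_hasDerivAt (σ := fun r => r - 2)
    (w := fun _ _ x => 1 * jb x ^ (1 : ℝ)) (l := fun r _ x => r * x)
    (B := fun r _ x => jb x ^ r) (E := fun r _ x => jb x ^ r)
    (fun r => (IsUniformSymbol.const r).mul isSymbol_id)
    (fun r _ x => hasDerivAt_jb_rpow r x) (fun r => ⟨1, fun _ x => ?_⟩) (fun r _ x => ?_) r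
  · rw [one_mul, abs_of_pos (Real.rpow_pos_of_pos (jb_pos x) r)]
  · rw [one_mul, ← Real.rpow_add (jb_pos x), ← Real.rpow_sub_one (jb_pos x).ne']
    congr 1
    ring

lemma IsSymbol.mul {r' : ℝ} {g : ℝ → ℝ} (hf : IsSymbol r f) (hg : IsSymbol r' g) :
    IsSymbol (r + r') fun x => f x * g x := by
  simpa only [IsSymbol, Real.rpow_add (jb_pos _)] using IsUniformSymbol.mul hf hg

protected lemma IsSymbol.deriv (hf : IsSymbol r f) : IsSymbol (r - 1) (deriv f) := by
  simpa only [IsSymbol, Real.rpow_sub_one (jb_pos _).ne'] using IsUniformSymbol.deriv hf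

lemma isSymbol_mul_jb_rpow_neg_two : IsSymbol (-1) fun x => x * jb x ^ (-2 : ℝ) := by
  convert isSymbol_id.mul (isSymbol_jb_rpow (-2)) using 1
  norm_num

lemma hasCompactSupport_iteratedDeriv (hf : HasCompactSupport f) (n : ℕ) :
    HasCompactSupport (iteratedDeriv n f) :=
  iteratedDeriv_eq_iterate (f := f) ▸ Function.Iterate.rec HasCompactSupport hf
    (fun _ h => h.deriv) n

lemma isSymbol_zero_of_hasCompactSupport_deriv (hf : ContDiff ℝ (⊤ : ℕ∞) f)
    (hfb : ∃ C, ∀ x, |f x| ≤ C) (hf' : HasCompactSupport (deriv f)) : IsSymbol 0 f := by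
  refine ⟨fun _ => hf, fun n => ?_⟩
  rcases n with _ | n
  · simpa using hfb
  · have hsupp : HasCompactSupport fun x => iteratedDeriv n (deriv f) x * jb x ^ (n + 1) :=
      (hasCompactSupport_iteratedDeriv hf' n).mul_right
    have hcont : Continuous fun x => iteratedDeriv n (deriv f) x * jb x ^ (n + 1) :=
      ((contDiff_infty_iff_deriv.1 hf).2.continuous_iteratedDeriv n (mod_cast le_top)).mul
        ((contDiff_jb (n := 0)).continuous.pow _)
    obtain ⟨C, hC⟩ := hsupp.exists_bound_of_continuous hcont
    refine ⟨C, fun _ x => ?_⟩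
    have hpos := pow_pos (jb_pos x) (n + 1)
    rw [iteratedDeriv_succ', Real.rpow_zero, mul_one_div, le_div_iff₀ hpos, ← abs_of_pos hpos,
      ← abs_mul]
    exact hC x

lemma hasCompactSupport_deriv_of_const_on_ends {R : ℝ}
    (hfp : ∀ x y, R ≤ x → R ≤ y → f x = f y) (hfm : ∀ x y, x ≤ -R → y ≤ -R → f x = f y) :
    HasCompactSupport (deriv f) := by
  refine HasCompactSupport.intro (isCompact_Icc (a := -R) (b := R)) fun x hx => ?_
  have hloc : f =ᶠ[nhds x] fun _ => f x := by
    rcases lt_or_ge x (-R) with hxR | hxR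
    · filter_upwards [Iio_mem_nhds hxR] with y hy using hfm y x (le_of_lt hy) hxR.le
    · have hRx : R < x := not_le.1 fun hle => hx ⟨hxR, hle⟩
      filter_upwards [Ioi_mem_nhds hRx] with y hy using hfp y x (le_of_lt hy) hRx.le
  simp only [hloc.deriv_eq, deriv_const]

end Symbols

/-- A smooth cutoff with support in `[-1, 1]`. Of the properties of `ψ` only these are kept, because
they survive the Euler operator. -/
structure IsCutoff (φ : ℝ → ℝ) : Prop where
  contDiff : ContDiff ℝ (⊤ : ℕ∞) φ
  eq_zero : ∀ t, 1 < |t| → φ t = 0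

/-- The Euler operator `t d/dt`. Since `u ∂_u` and `-W ∂_W` both act on `φ (u / W)` as this operator
acts on `φ`, its iterates replace all derivatives of a dilated cutoff. -/
def eulerOp (φ : ℝ → ℝ) (t : ℝ) : ℝ := t * deriv φ t

namespace IsCutoff

variable {φ : ℝ → ℝ}

protected lemma eulerOp (hφ : IsCutoff φ) : IsCutoff (eulerOp φ) := by
  refine ⟨contDiff_id.mul (contDiff_infty_iff_deriv.1 hφ.contDiff).2, fun t ht => ?_⟩
  have hloc : φ =ᶠ[nhds t] fun _ => 0 := by
    filter_upwards [(isOpen_lt continuous_const continuous_abs).mem_nhds ht] with u hu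
      using hφ.eq_zero u hu
  rw [eulerOp, hloc.deriv_eq, deriv_const, mul_zero]

lemma iterate_eulerOp (hφ : IsCutoff φ) (j : ℕ) : IsCutoff (eulerOp^[j] φ) :=
  Function.Iterate.rec IsCutoff hφ (fun _ h => h.eulerOp) j

lemma hasDerivAt (hφ : IsCutoff φ) (t : ℝ) : HasDerivAt φ (deriv φ t) t :=
  (hφ.contDiff.differentiable (by simp) t).hasDerivAt

lemma exists_abs_le (hφ : IsCutoff φ) : ∃ C, ∀ t, |φ t| ≤ C :=
  HasCompactSupport.exists_bound_of_continuous
    (HasCompactSupport.intro (isCompact_Icc (a := -1) (b := 1)) fun t ht =>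
      hφ.eq_zero t (not_le.1 fun hle => ht (abs_le.1 hle))) hφ.contDiff.continuous

lemma apply_jb_div_eq_zero (hφ : IsCutoff φ) {x W : ℝ} (hW : 0 < W) (hx : W < jb x) :
    φ (jb x / W) = 0 :=
  hφ.eq_zero _ (by rwa [abs_of_pos (div_pos (jb_pos x) hW), one_lt_div hW])

lemma hasDerivAt_div (hφ : IsCutoff φ) (u : ℝ) {W : ℝ} (hW : W ≠ 0) :
    HasDerivAt (fun W => φ (u / W)) (-(1 / W) * eulerOp φ (u / W)) W := by
  have hdiv : HasDerivAt (fun W : ℝ => u / W) (-u / W ^ 2) W := by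
    simpa using (hasDerivAt_const W u).fun_div (hasDerivAt_id W) hW
  refine ((hφ.hasDerivAt (u / W)).comp W hdiv).congr_deriv ?_
  simp only [eulerOp]
  field_simp

lemma hasDerivAt_jb_div (hφ : IsCutoff φ) (x W : ℝ) :
    HasDerivAt (fun x => φ (jb x / W))
      (x * jb x ^ (-2 : ℝ) * eulerOp φ (jb x / W)) x := by
  have hx := jb_pos x
  refine ((hφ.hasDerivAt (jb x / W)).comp x ((hasDerivAt_jb x).div_const W)).congr_deriv ?_
  rw [eulerOp, Real.rpow_neg hx.le, Real.rpow_two]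
  field_simp

end IsCutoff

/-- `∫₀ˣ ⟨y⟩^s φ(⟨y⟩ / W) dy`, the integral in `λ_{p-k}` with the scale `W` in place of
`⟨ξ⟩ₕ^(p - 1)`. -/
def cutoffIntegral (s : ℝ) (φ : ℝ → ℝ) (W x : ℝ) : ℝ :=
  ∫ y in (0 : ℝ)..x, jb y ^ s * φ (jb y / W)

lemma cutoffIntegral_neg (s : ℝ) (φ : ℝ → ℝ) (W x : ℝ) :
    cutoffIntegral s φ W (-x) = -cutoffIntegral s φ W x := by
  have h := intervalIntegral.integral_comp_neg (a := 0) (b := x) fun y => jb y ^ s * φ (jb y / W)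
  simp only [jb_neg, neg_zero] at h
  rw [cutoffIntegral, cutoffIntegral, h, intervalIntegral.integral_symm]

namespace IsCutoff

variable {φ g : ℝ → ℝ} {s C W x : ℝ}

lemma contDiff_mul_jb_div (hφ : IsCutoff φ) (hg : ContDiff ℝ (⊤ : ℕ∞) g) (W : ℝ) :
    ContDiff ℝ (⊤ : ℕ∞) fun x => g x * φ (jb x / W) :=
  hg.mul (hφ.contDiff.comp (contDiff_jb.div_const W))

lemma continuous_jb_rpow_mul (hφ : IsCutoff φ) (s W : ℝ) :
    Continuous fun x => jb x ^ s * φ (jb x / W) :=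
  (hφ.contDiff_mul_jb_div (contDiff_jb_rpow s) W).continuous

lemma iteratedDeriv_succ_mul_jb_div (hφ : IsCutoff φ) (hg : ContDiff ℝ (⊤ : ℕ∞) g)
    (n : ℕ) (W x : ℝ) :
    iteratedDeriv (n + 1) (fun x => g x * φ (jb x / W)) x =
      iteratedDeriv n (fun x => deriv g x * φ (jb x / W)) x +
        iteratedDeriv n (fun x => g x * (x * jb x ^ (-2 : ℝ)) * eulerOp φ (jb x / W)) x := by
  have hg' := hφ.contDiff_mul_jb_div (contDiff_infty_iff_deriv.1 hg).2 W
  have hgl := hφ.eulerOp.contDiff_mul_jb_div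
    (hg.mul (contDiff_fun_id.mul (contDiff_jb_rpow (-2)))) W
  rw [iteratedDeriv_succ', ← iteratedDeriv_fun_add (hg'.contDiffAt.of_le (mod_cast le_top))
    (hgl.contDiffAt.of_le (mod_cast le_top))]
  congr 1
  funext y
  rw [((hg.differentiable (by simp) y).hasDerivAt.fun_mul (hφ.hasDerivAt_jb_div y W)).deriv]
  ring

lemma iteratedDeriv_succ_cutoffIntegral (hφ : IsCutoff φ) (n : ℕ) (s W : ℝ) :
    iteratedDeriv (n + 1) (cutoffIntegral s φ W) =
      iteratedDeriv n fun x => jb x ^ s * φ (jb x / W) := by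
  rw [iteratedDeriv_succ']
  congr 1
  exact funext fun x => (hφ.continuous_jb_rpow_mul s W).deriv_integral _ 0 x

lemma hasDerivAt_cutoffIntegral (hφ : IsCutoff φ) (s x : ℝ) (hW : 0 < W) :
    HasDerivAt (fun W => cutoffIntegral s φ W x)
      (-(1 / W) * cutoffIntegral s (eulerOp φ) W x) W := by
  obtain ⟨C, hC⟩ := hφ.eulerOp.exists_abs_le
  have hdominated (y V : ℝ) (hV : V ∈ Set.Ioi (W / 2)) :
      ‖-(1 / V) * (jb y ^ s * eulerOp φ (jb y / V))‖ ≤ 2 / W * (jb y ^ s * C) := by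
    have hV0 : 0 < V := (half_pos hW).trans hV
    have hjb := Real.rpow_pos_of_pos (jb_pos y) s
    have hinv : 1 / V ≤ 2 / W := by
      simpa only [one_div_div] using one_div_le_one_div_of_le (half_pos hW) (le_of_lt hV)
    rw [Real.norm_eq_abs, abs_mul, abs_neg, abs_mul, abs_of_pos hjb, abs_of_pos (by positivity)]
    gcongr
    exact hC _
  have hderiv (y V : ℝ) (hV : V ∈ Set.Ioi (W / 2)) :
      HasDerivAt (fun V => jb y ^ s * φ (jb y / V))
        (-(1 / V) * (jb y ^ s * eulerOp φ (jb y / V))) V :=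
    ((hφ.hasDerivAt_div (jb y) ((half_pos hW).trans hV).ne').const_mul _).congr_deriv (by ring)
  have hmain := (intervalIntegral.hasDerivAt_integral_of_dominated_loc_of_deriv_le (μ := volume)
    (a := 0) (b := x) (Ioi_mem_nhds (half_lt_self hW))
    (Filter.Eventually.of_forall fun V => (hφ.continuous_jb_rpow_mul s V).aestronglyMeasurable)
    ((hφ.continuous_jb_rpow_mul s W).intervalIntegrable 0 x)
    ((hφ.eulerOp.continuous_jb_rpow_mul s W).const_mul _).aestronglyMeasurable
    (Filter.Eventually.of_forall fun y _ => hdominated y)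
    ((((contDiff_jb_rpow s (n := 0)).continuous.mul_const C).const_mul _).intervalIntegrable 0 x)
    (Filter.Eventually.of_forall fun y _ => hderiv y)).2
  simpa only [cutoffIntegral, intervalIntegral.integral_const_mul] using hmain

lemma cutoffIntegral_eq_of_le (hφ : IsCutoff φ) (s : ℝ) (hW : 0 < W) (hx : W ≤ x) :
    cutoffIntegral s φ W x = cutoffIntegral s φ W W := by
  have hzero : ∫ y in W..x, jb y ^ s * φ (jb y / W) = 0 := by
    refine intervalIntegral.integral_zero_ae (Filter.Eventually.of_forall fun y hy => ?_)
    rw [Set.uIoc_of_le hx] at hy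
    rw [hφ.apply_jb_div_eq_zero hW (hy.1.trans_le ((le_abs_self y).trans (abs_le_jb y))), mul_zero]
  rw [cutoffIntegral, ← intervalIntegral.integral_add_adjacent_intervals
    ((hφ.continuous_jb_rpow_mul s W).intervalIntegrable 0 W)
    ((hφ.continuous_jb_rpow_mul s W).intervalIntegrable W x), hzero, add_zero, cutoffIntegral]

lemma abs_jb_rpow_mul_apply_jb_div_le (hφ : IsCutoff φ) (hC : ∀ t, |φ t| ≤ C) (s : ℝ) (hW : 0 < W)
    (hx : 0 < x) : |jb x ^ s * φ (jb x / W)| ≤ (x ^ s + W ^ s) * C := by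
  have hC0 := (abs_nonneg _).trans (hC 0)
  rw [abs_mul, abs_of_pos (Real.rpow_pos_of_pos (jb_pos x) s)]
  rcases le_or_gt (jb x) W with hxW | hxW
  · gcongr
    · exact jb_rpow_le_rpow_add_rpow hx hxW
    · exact hC _
  · rw [hφ.apply_jb_div_eq_zero hW hxW, abs_zero, mul_zero]
    positivity

lemma abs_cutoffIntegral_le (hφ : IsCutoff φ) (hC : ∀ t, |φ t| ≤ C) (hs : -1 < s) (hW : 0 < W)
    (hx : 0 ≤ x) (hxW : x ≤ W) :
    |cutoffIntegral s φ W x| ≤ (1 / (s + 1) + 1) * C * W ^ (s + 1) := by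
  have hs1 : 0 < s + 1 := by linarith
  have hC0 := (abs_nonneg _).trans (hC 0)
  have hbound (y : ℝ) (hy : y ∈ Set.Ioc 0 x) : ‖jb y ^ s * φ (jb y / W)‖ ≤ (y ^ s + W ^ s) * C :=
    hφ.abs_jb_rpow_mul_apply_jb_div_le hC s hW hy.1
  have hint := intervalIntegral.intervalIntegrable_rpow' (a := 0) (b := x) hs
  calc |cutoffIntegral s φ W x|
      ≤ ∫ y in (0 : ℝ)..x, (y ^ s + W ^ s) * C :=
        intervalIntegral.norm_integral_le_of_norm_le hx
          (Filter.Eventually.of_forall hbound) ((hint.add intervalIntegrable_const).mul_const C)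
    _ = (x ^ (s + 1) / (s + 1) + x * W ^ s) * C := by
        rw [intervalIntegral.integral_mul_const,
          intervalIntegral.integral_add hint intervalIntegrable_const, integral_rpow (Or.inl hs),
          Real.zero_rpow hs1.ne', intervalIntegral.integral_const, sub_zero, sub_zero,
          smul_eq_mul]
    _ ≤ (W ^ (s + 1) / (s + 1) + W * W ^ s) * C := by gcongr
    _ = (1 / (s + 1) + 1) * C * W ^ (s + 1) := by
        rw [Real.rpow_add_one hW.ne']
        ring

lemma exists_abs_cutoffIntegral_le (hφ : IsCutoff φ) (hs : -1 < s) :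
    ∃ C, ∀ x W, 0 < W → |cutoffIntegral s φ W x| ≤ C * W ^ (s + 1) := by
  obtain ⟨C, hC⟩ := hφ.exists_abs_le
  refine ⟨(1 / (s + 1) + 1) * C, fun x W hW => ?_⟩
  wlog hx : 0 ≤ x generalizing x
  · simpa only [cutoffIntegral_neg, abs_neg] using this (-x) (by linarith)
  rcases le_total x W with hxW | hxW
  · exact hφ.abs_cutoffIntegral_le hC hs hW hx hxW
  · rw [hφ.cutoffIntegral_eq_of_le s hW hxW]
    exact hφ.abs_cutoffIntegral_le hC hs hW hW.le le_rfl

end IsCutoff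

section Scale

lemma isUniformSymbol_comp_mul_jb_rpow {κ : Type*} {J : ℕ → κ → ℝ → ℝ} {B : κ → ℝ → ℝ}
    (hJ : ∀ j x W, 0 < W → HasDerivAt (J j x) (-(1 / W) * J (j + 1) x W) W)
    (hB : ∀ j, ∃ C, ∀ x W, 0 < W → |J j x W| ≤ C * B x W) (q : ℝ) :
    IsUniformSymbol (fun (i : Set.Ioi (0 : ℝ) × κ) η => B i.2 (i.1 * jb η ^ q))
      fun i η => J 0 i.2 (i.1 * jb η ^ q) := by
  have hW (c : Set.Ioi (0 : ℝ)) (η : ℝ) : 0 < c * jb η ^ q :=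
    mul_pos c.2 (Real.rpow_pos_of_pos (jb_pos η) q)
  refine IsUniformSymbol.of_hasDerivAt (σ := Nat.succ) (w := fun _ _ η => 1 * jb η ^ (-1 : ℝ))
    (l := fun _ _ η => -q * (η * jb η ^ (-2 : ℝ)))
    (B := fun _ (i : Set.Ioi (0 : ℝ) × κ) η => B i.2 (i.1 * jb η ^ q))
    (E := fun j i η => J j i.2 (i.1 * jb η ^ q))
    (fun _ => (IsUniformSymbol.const (-q)).mul
      (isSymbol_mul_jb_rpow_neg_two.reindex fun _ => ()))
    (fun j i η => ?_) (fun j => ?_) (fun _ i η => ?_) 0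
  · refine ((hJ j i.2 _ (hW i.1 η)).comp η
      ((hasDerivAt_jb_rpow q η).const_mul (i.1 : ℝ))).congr_deriv ?_
    have hc : (i.1 : ℝ) ≠ 0 := i.1.2.ne'
    have hη := Real.rpow_pos_of_pos (jb_pos η) q
    rw [sub_eq_add_neg q, Real.rpow_add (jb_pos η)]
    field_simp
  · exact (hB j).imp fun C hC i η => hC i.2 _ (hW i.1 η)
  · rw [Real.rpow_neg_one, one_mul, div_eq_inv_mul]

variable {φ g : ℝ → ℝ} {r : ℝ}

lemma IsCutoff.isUniformSymbol_mul_jb_div (hφ : IsCutoff φ) (hg : IsSymbol r g) (q : ℝ) :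
    IsUniformSymbol
      (fun (i : Set.Ioi (0 : ℝ) × ℝ) η =>
        jb i.2 ^ r * Set.indicator {x | jb x ≤ i.1 * jb η ^ q} (fun _ => (1 : ℝ)) i.2)
      fun i η => g i.2 * φ (jb i.2 / (i.1 * jb η ^ q)) := by
  refine isUniformSymbol_comp_mul_jb_rpow (J := fun j x W => g x * (eulerOp^[j] φ) (jb x / W))
    (B := fun x W => jb x ^ r * Set.indicator {x | jb x ≤ W} (fun _ => (1 : ℝ)) x)
    (fun j x W hW => ?_) (fun j => ?_) q
  · rw [Function.iterate_succ_apply']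
    exact (((hφ.iterate_eulerOp j).hasDerivAt_div (jb x) hW.ne').const_mul _).congr_deriv (by ring)
  · obtain ⟨C, hC⟩ := hg.exists_abs_le
    obtain ⟨D, hD⟩ := (hφ.iterate_eulerOp j).exists_abs_le
    refine ⟨C * D, fun x W hW => ?_⟩
    by_cases hx : x ∈ {x | jb x ≤ W}
    · rw [Set.indicator_of_mem hx, abs_mul, mul_one, mul_right_comm]
      exact mul_le_mul (hC () x) (hD _) (abs_nonneg _) ((abs_nonneg _).trans (hC () x))
    · rw [Set.indicator_of_notMem hx, (hφ.iterate_eulerOp j).apply_jb_div_eq_zero hW (not_le.1 hx)]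
      simp only [mul_zero, abs_zero, le_refl]

lemma IsCutoff.isUniformSymbol_iteratedDeriv_mul_jb_div (hφ : IsCutoff φ) (hg : IsSymbol r g)
    (q : ℝ) (b : ℕ) :
    IsUniformSymbol
      (fun (i : Set.Ioi (0 : ℝ) × ℝ) η =>
        jb i.2 ^ (r - b) * Set.indicator {x | jb x ≤ i.1 * jb η ^ q} (fun _ => (1 : ℝ)) i.2)
      fun i η => iteratedDeriv b (fun x => g x * φ (jb x / (i.1 * jb η ^ q))) i.2 := by
  induction b generalizing g φ r with
  | zero => simpa using hφ.isUniformSymbol_mul_jb_div hg q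
  | succ b ih =>
    have hexp : r - (b + 1 : ℕ) = r - 1 - b := by
      push_cast
      ring
    simp only [hφ.iteratedDeriv_succ_mul_jb_div (hg.contDiff ()), hexp]
    exact (ih hφ hg.deriv).add (ih hφ.eulerOp (hg.mul isSymbol_mul_jb_rpow_neg_two))

lemma IsCutoff.isUniformSymbol_iteratedDeriv_succ_cutoffIntegral (hφ : IsCutoff φ) (s q : ℝ)
    (b : ℕ) :
    IsUniformSymbol
      (fun (i : Set.Ioi (0 : ℝ) × ℝ) η =>
        jb i.2 ^ (s - b) * Set.indicator {x | jb x ≤ i.1 * jb η ^ q} (fun _ => (1 : ℝ)) i.2)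
      fun i η => iteratedDeriv (b + 1) (cutoffIntegral s φ (i.1 * jb η ^ q)) i.2 := by
  simpa only [hφ.iteratedDeriv_succ_cutoffIntegral] using
    hφ.isUniformSymbol_iteratedDeriv_mul_jb_div (isSymbol_jb_rpow s) q b

lemma IsCutoff.isUniformSymbol_cutoffIntegral {s : ℝ} (hφ : IsCutoff φ) (hs : -1 < s) (q : ℝ) :
    IsUniformSymbol (fun (i : Set.Ioi (0 : ℝ) × ℝ) η => (i.1 * jb η ^ q) ^ (s + 1))
      fun i η => cutoffIntegral s φ (i.1 * jb η ^ q) i.2 := by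
  refine isUniformSymbol_comp_mul_jb_rpow
    (J := fun j x W => cutoffIntegral s (eulerOp^[j] φ) W x) (B := fun _ W => W ^ (s + 1))
    (fun j x W hW => ?_) (fun j => (hφ.iterate_eulerOp j).exists_abs_cutoffIntegral_le hs) q
  rw [Function.iterate_succ_apply']
  exact (hφ.iterate_eulerOp j).hasDerivAt_cutoffIntegral s x hW

lemma exists_abs_iteratedDeriv_mul_jbh_rpow_mul_le {κ : Type*} {ω : ℝ → ℝ} {K B : κ → ℝ → ℝ} {q : ℝ}
    (hω : IsSymbol 0 ω) (hB : ∀ x W, 0 < W → 0 ≤ B x W)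
    (hK : IsUniformSymbol (fun (i : Set.Ioi (0 : ℝ) × κ) η => B i.2 (i.1 * jb η ^ q))
      fun i η => K i.2 (i.1 * jb η ^ q)) (m : ℝ) (n : ℕ) :
    ∃ C > 0, ∀ h, 0 < h → ∀ x ξ,
      |iteratedDeriv n (fun ξ => ω (ξ / h) * jbh h ξ ^ m * K x (jbh h ξ ^ q)) ξ| ≤
        C * (jbh h ξ ^ (m - n) * B x (jbh h ξ ^ q)) := by
  have hG := ((hω.mul (isSymbol_jb_rpow m)).reindex fun _ : Set.Ioi (0 : ℝ) × κ => ()).mul hK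
  obtain ⟨C, hC⟩ := hG.exists_bound n
  refine ⟨max C 1, by positivity, fun h hh x ξ => ?_⟩
  set i : Set.Ioi (0 : ℝ) × κ := (⟨h ^ q, Real.rpow_pos_of_pos hh q⟩, x)
  set G : ℝ → ℝ := fun η => ω η * jb η ^ m * K x (h ^ q * jb η ^ q)
  have hscale : (fun ξ => ω (ξ / h) * jbh h ξ ^ m * K x (jbh h ξ ^ q)) =
      fun ξ => h ^ m * G (h⁻¹ * ξ) := by
    funext ξ
    simp only [G, jbh_rpow hh, inv_mul_eq_div]
    ring
  have hsmooth : ContDiff ℝ n G := (hG.contDiff i).of_le (mod_cast le_top)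
  have hjbh := jbh_pos hh ξ
  calc |iteratedDeriv n (fun ξ => ω (ξ / h) * jbh h ξ ^ m * K x (jbh h ξ ^ q)) ξ|
      = h ^ m * (h⁻¹ ^ n * |iteratedDeriv n G (ξ / h)|) := by
        rw [hscale, iteratedDeriv_const_mul_field, iteratedDeriv_comp_const_mul hsmooth,
          abs_mul, abs_mul, abs_of_pos (Real.rpow_pos_of_pos hh m),
          abs_of_pos (pow_pos (inv_pos.2 hh) n), inv_mul_eq_div]
    _ ≤ h ^ m * (h⁻¹ ^ n * (C * (jb (ξ / h) ^ (0 + m) * B x (h ^ q * jb (ξ / h) ^ q) /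
          jb (ξ / h) ^ n))) := by
        gcongr
        exact hC i (ξ / h)
    _ = C * (jbh h ξ ^ (m - n) * B x (jbh h ξ ^ q)) := by
        have hjb := jb_pos (ξ / h)
        rw [Real.rpow_sub_natCast hjbh.ne', jbh_rpow hh ξ m, jbh_rpow hh ξ q, jbh_eq_mul_jb hh,
          zero_add, mul_pow, inv_pow]
        field_simp
    _ ≤ max C 1 * (jbh h ξ ^ (m - n) * B x (jbh h ξ ^ q)) := by
        have := hB x (jbh h ξ ^ q) (Real.rpow_pos_of_pos hjbh q)
        gcongr
        exact le_max_left C 1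

end Scale

/-- The symbol `λ_{p-k}(x, ξ)` with parameters `M` and `h`. The exponents `p` and `k` are allowed to
be real. -/
def lambdaSymbol (p k : ℝ) (ω ψ : ℝ → ℝ) (M h x ξ : ℝ) : ℝ :=
  M * ω (ξ / h) * jbh h ξ ^ (-k + 1) *
    cutoffIntegral (-((p - k) / (p - 1))) ψ (jbh h ξ ^ (p - 1)) x

section LambdaSymbol

variable {p k : ℝ} {ω ψ : ℝ → ℝ}

lemma iteratedDeriv_iteratedDeriv_lambdaSymbol (α β : ℕ) (M h x ξ : ℝ) :
    iteratedDeriv α (fun ξ => iteratedDeriv β (fun x => lambdaSymbol p k ω ψ M h x ξ) x) ξ =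
      M * iteratedDeriv α (fun ξ => ω (ξ / h) * jbh h ξ ^ (-k + 1) *
        iteratedDeriv β (cutoffIntegral (-((p - k) / (p - 1))) ψ (jbh h ξ ^ (p - 1))) x) ξ := by
  simp only [lambdaSymbol, iteratedDeriv_const_mul_field, mul_assoc]

lemma exists_abs_iteratedDeriv_lambdaSymbol_le {B : ℝ → ℝ → ℝ} {β : ℕ} (hω : IsSymbol 0 ω)
    (hB : ∀ x W, 0 < W → 0 ≤ B x W)
    (hI : IsUniformSymbol
      (fun (i : Set.Ioi (0 : ℝ) × ℝ) η => B i.2 (i.1 * jb η ^ (p - 1)))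
      fun i η =>
        iteratedDeriv β (cutoffIntegral (-((p - k) / (p - 1))) ψ (i.1 * jb η ^ (p - 1))) i.2)
    (α : ℕ) :
    ∃ C > 0, ∀ M h, 0 ≤ M → 0 < h → ∀ x ξ,
      |iteratedDeriv α (fun ξ => iteratedDeriv β (fun x => lambdaSymbol p k ω ψ M h x ξ) x) ξ| ≤
        C * M * (jbh h ξ ^ (-k + 1 - α) * B x (jbh h ξ ^ (p - 1))) := by
  obtain ⟨C, hC0, hC⟩ := exists_abs_iteratedDeriv_mul_jbh_rpow_mul_le
    (K := fun x W => iteratedDeriv β (cutoffIntegral (-((p - k) / (p - 1))) ψ W) x)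
    hω hB hI (-k + 1) α
  refine ⟨C, hC0, fun M h hM hh x ξ => ?_⟩
  rw [iteratedDeriv_iteratedDeriv_lambdaSymbol, abs_mul, abs_of_nonneg hM, mul_comm C, mul_assoc]
  exact mul_le_mul_of_nonneg_left (hC h hh x ξ) hM

lemma exists_abs_iteratedDeriv_lambdaSymbol_le_jbh (hp : 1 < p) (hk : 1 < k) (hω : IsSymbol 0 ω)
    (hψ : IsCutoff ψ) (α : ℕ) :
    ∃ C > 0, ∀ M h, 0 ≤ M → 0 < h → ∀ x ξ,
      |iteratedDeriv α (fun ξ => lambdaSymbol p k ω ψ M h x ξ) ξ| ≤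
        C * M * jbh h ξ ^ (-(α : ℝ)) := by
  have hp1 : 0 < p - 1 := sub_pos.2 hp
  have hs : -((p - k) / (p - 1)) + 1 = (k - 1) / (p - 1) := by
    field_simp
    ring
  have hs1 : -1 < -((p - k) / (p - 1)) := by
    have : 0 < (k - 1) / (p - 1) := div_pos (sub_pos.2 hk) hp1
    linarith
  obtain ⟨C, hC0, hC⟩ := exists_abs_iteratedDeriv_lambdaSymbol_le (β := 0)
    (B := fun _ W => W ^ (-((p - k) / (p - 1)) + 1)) hω
    (fun _ W hW => Real.rpow_nonneg hW.le _) (by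
      simpa only [iteratedDeriv_zero] using hψ.isUniformSymbol_cutoffIntegral hs1 (p - 1)) α
  refine ⟨C, hC0, fun M h hM hh x ξ => (hC M h hM hh x ξ).trans_eq ?_⟩
  have hjbh := jbh_pos hh ξ
  rw [hs, ← Real.rpow_mul hjbh.le, mul_div_cancel₀ _ hp1.ne', ← Real.rpow_add hjbh]
  ring_nf

lemma exists_abs_iteratedDeriv_succ_lambdaSymbol_le (hp : p ≠ 1) (hω : IsSymbol 0 ω)
    (hψ : IsCutoff ψ) (α b : ℕ) :
    ∃ C > 0, ∀ M h, 0 ≤ M → 0 < h → ∀ x ξ,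
      |iteratedDeriv α
          (fun ξ => iteratedDeriv (b + 1) (fun x => lambdaSymbol p k ω ψ M h x ξ) x) ξ| ≤
        C * M * jb x ^ ((k - 1) / (p - 1) - (b + 1 : ℕ)) * jbh h ξ ^ (-(α : ℝ) - k + 1) *
          Set.indicator {x | jb x ≤ jbh h ξ ^ (p - 1)} (fun _ => (1 : ℝ)) x := by
  obtain ⟨C, hC0, hC⟩ := exists_abs_iteratedDeriv_lambdaSymbol_le
    (B := fun x W => jb x ^ (-((p - k) / (p - 1)) - b) *
      Set.indicator {x | jb x ≤ W} (fun _ => (1 : ℝ)) x) hω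
    (fun x W _ => mul_nonneg (Real.rpow_nonneg (jb_pos x).le _)
      (Set.indicator_nonneg (fun _ _ => zero_le_one) x))
    (hψ.isUniformSymbol_iteratedDeriv_succ_cutoffIntegral (-((p - k) / (p - 1))) (p - 1) b) α
  refine ⟨C, hC0, fun M h hM hh x ξ => (hC M h hM hh x ξ).trans_eq ?_⟩
  have hs : -((p - k) / (p - 1)) - b = (k - 1) / (p - 1) - (b + 1 : ℕ) := by
    have := sub_ne_zero.2 hp
    push_cast
    field_simp
    ring
  rw [hs, show -k + 1 - (α : ℝ) = -α - k + 1 by ring]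
  ring

lemma jb_rpow_mul_jbh_rpow_mul_indicator_le {h : ℝ} (hp : 1 < p) (hk : 1 ≤ k) (hh : 0 < h)
    (a b x ξ : ℝ) :
    jb x ^ ((k - 1) / (p - 1) - b) * jbh h ξ ^ (-a - k + 1) *
        Set.indicator {x | jb x ≤ jbh h ξ ^ (p - 1)} (fun _ => (1 : ℝ)) x ≤
      jb x ^ (-b) * jbh h ξ ^ (-a) := by
  have hx := jb_pos x
  have hξ := jbh_pos hh ξ
  by_cases hmem : x ∈ {x | jb x ≤ jbh h ξ ^ (p - 1)}
  · have hp1 : 0 < p - 1 := sub_pos.2 hp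
    have hgain : jb x ^ ((k - 1) / (p - 1)) ≤ jbh h ξ ^ (k - 1) := by
      calc jb x ^ ((k - 1) / (p - 1))
          ≤ (jbh h ξ ^ (p - 1)) ^ ((k - 1) / (p - 1)) :=
            Real.rpow_le_rpow hx.le hmem (div_nonneg (sub_nonneg.2 hk) hp1.le)
        _ = jbh h ξ ^ (k - 1) := by rw [← Real.rpow_mul hξ.le, mul_div_cancel₀ _ hp1.ne']
    calc _ = jb x ^ ((k - 1) / (p - 1)) * (jb x ^ (-b) * jbh h ξ ^ (-a - k + 1)) := by
          rw [Set.indicator_of_mem hmem, mul_one, sub_eq_add_neg _ b, Real.rpow_add hx, mul_assoc]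
      _ ≤ jbh h ξ ^ (k - 1) * (jb x ^ (-b) * jbh h ξ ^ (-a - k + 1)) := by gcongr
      _ = jb x ^ (-b) * jbh h ξ ^ (-a) := by
          rw [mul_left_comm, ← Real.rpow_add hξ]
          ring_nf
  · rw [Set.indicator_of_notMem hmem, mul_zero]
    positivity

theorem stmt3_general (hp : 1 < p) (hk : 1 < k) (hω : IsSymbol 0 ω) (hψ : IsCutoff ψ)
    (α β : ℕ) :
    ∃ C > 0, ∀ M h : ℝ, 0 ≤ M → 0 < h →
      (∀ x ξ : ℝ,
        |iteratedDeriv α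
            (fun ξ => iteratedDeriv β (fun x => lambdaSymbol p k ω ψ M h x ξ) x) ξ| ≤
          C * M * jb x ^ (-(β : ℝ)) * jbh h ξ ^ (-(α : ℝ))) ∧
      (1 ≤ β → ∀ x ξ : ℝ,
        |iteratedDeriv α
            (fun ξ => iteratedDeriv β (fun x => lambdaSymbol p k ω ψ M h x ξ) x) ξ| ≤
          C * M * jb x ^ ((k - 1) / (p - 1) - β) * jbh h ξ ^ (-(α : ℝ) - k + 1) *
            Set.indicator {x | jb x ≤ jbh h ξ ^ (p - 1)} (fun _ => (1 : ℝ)) x) := by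
  rcases β with _ | b
  · obtain ⟨C, hC0, hC⟩ := exists_abs_iteratedDeriv_lambdaSymbol_le_jbh hp hk hω hψ α
    refine ⟨C, hC0, fun M h hM hh => ⟨fun x ξ => ?_, fun hβ => absurd hβ (by norm_num)⟩⟩
    simpa using hC M h hM hh x ξ
  · obtain ⟨C, hC0, hC⟩ :=
      exists_abs_iteratedDeriv_succ_lambdaSymbol_le (k := k) hp.ne' hω hψ α b
    refine ⟨C, hC0, fun M h hM hh =>
      ⟨fun x ξ => (hC M h hM hh x ξ).trans ?_, fun _ => hC M h hM hh⟩⟩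
    simpa only [mul_assoc] using mul_le_mul_of_nonneg_left
      (jb_rpow_mul_jbh_rpow_mul_indicator_le hp hk.le hh α (b + 1 : ℕ) x ξ) (mul_nonneg hC0.le hM)

end LambdaSymbol

/-- estimates for `∂_ξ^α ∂_x^β λ_{p-k}(x,ξ)`, where
`λ_{p-k}(x,ξ) = M·ω(ξ/h)·⟨ξ⟩ₕ^{-k+1}·∫₀ˣ ⟨y⟩^{-(p-k)/(p-1)} ψ(⟨y⟩/⟨ξ⟩ₕ^{p-1}) dy`,
with constants independent of `h`, `M`, `x`, `ξ`, together with the refined bound for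
`β ≥ 1` involving the characteristic function of `{x : ⟨x⟩ ≤ ⟨ξ⟩ₕ^{p-1}}`. -/
theorem stmt3 (p k : ℕ) (hp : 2 ≤ p) (hk2 : 2 ≤ k) (hkp : k ≤ p - 1)
    (R : ℝ) (hR : 1 < R)
    (ω : ℝ → ℝ) (hω : ContDiff ℝ (⊤ : ℕ∞) ω) (hωb : ∀ ξ : ℝ, |ω ξ| ≤ 1)
    (hω0 : ∀ ξ : ℝ, |ξ| ≤ 1 → ω ξ = 0)
    (hωcp : ∀ ξ₁ ξ₂ : ℝ, R ≤ ξ₁ → R ≤ ξ₂ → ω ξ₁ = ω ξ₂)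
    (hωcm : ∀ ξ₁ ξ₂ : ℝ, ξ₁ ≤ -R → ξ₂ ≤ -R → ω ξ₁ = ω ξ₂)
    (ψ : ℝ → ℝ) (hψ : ContDiff ℝ (⊤ : ℕ∞) ψ) (hψc : HasCompactSupport ψ)
    (hψ01 : ∀ y : ℝ, 0 ≤ ψ y ∧ ψ y ≤ 1)
    (hψ1 : ∀ y : ℝ, |y| ≤ 1 / 2 → ψ y = 1)
    (hψ0 : ∀ y : ℝ, 1 ≤ |y| → ψ y = 0) :
    ∀ α β : ℕ, ∃ C > 0, ∀ M h : ℝ, 0 < M → 1 ≤ h →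
      (∀ x ξ : ℝ,
        |iteratedDeriv α
            (fun ξ' => iteratedDeriv β
              (fun x' => M * ω (ξ' / h) * jbh h ξ' ^ (-(k : ℝ) + 1) *
                ∫ y in (0:ℝ)..x',
                  jb y ^ (-(((p : ℝ) - k) / ((p : ℝ) - 1))) *
                    ψ (jb y / jbh h ξ' ^ ((p : ℝ) - 1))) x) ξ| ≤
          C * M * jb x ^ (-(β : ℝ)) * jbh h ξ ^ (-(α : ℝ))) ∧
      (1 ≤ β → ∀ x ξ : ℝ,
        |iteratedDeriv α
            (fun ξ' => iteratedDeriv β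
              (fun x' => M * ω (ξ' / h) * jbh h ξ' ^ (-(k : ℝ) + 1) *
                ∫ y in (0:ℝ)..x',
                  jb y ^ (-(((p : ℝ) - k) / ((p : ℝ) - 1))) *
                    ψ (jb y / jbh h ξ' ^ ((p : ℝ) - 1))) x) ξ| ≤
          C * M * jb x ^ (((k : ℝ) - 1) / ((p : ℝ) - 1) - β) *
            jbh h ξ ^ (-(α : ℝ) - (k : ℝ) + 1) *
            Set.indicator {x' : ℝ | jb x' ≤ jbh h ξ ^ ((p : ℝ) - 1)}
              (fun _ => (1:ℝ)) x) := by
  intro α β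
  obtain ⟨C, hC0, hC⟩ := stmt3_general (p := p) (k := k) (mod_cast hp) (mod_cast hk2)
    (isSymbol_zero_of_hasCompactSupport_deriv hω ⟨1, hωb⟩
      (hasCompactSupport_deriv_of_const_on_ends hωcp hωcm))
    ⟨hψ, fun t ht => hψ0 t ht.le⟩ α β
  exact ⟨C, hC0, fun M h hM hh => hC M h hM.le (zero_lt_one.trans_le hh)⟩
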